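/- At every point of the Boyer–Lindquist chart U, the Kinnersley tetrad (ℓ, n, m, m*) satisfies the normalization relations ḡ(ℓ,n) = −1, ḡ(m,m*) = 1, ḡ(ℓ,ℓ) = ḡ(n,n) = ḡ(m,m) = ḡ(m*,m*) = 0, and ḡ(ℓ,m) = ḡ(ℓ,m*) = ḡ(n,m) = ḡ(n,m*) = 0, where ḡ(X,Y) := Σ_{μ,ν} ḡ_{μν} X^μ Y^ν denotes the complex-bilinear contraction with the Kerr metric components. -/

import Mathlib

/-!
The Kerr metric is diagonal in Carter's coframe. With the one-forms
`α = dt − a sin²θ dφ` and `β = (r² + a²) dφ − a dt` one has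
`ḡ = −(Δ/Σ) α² + (Σ/Δ) dr² + Σ dθ² + (sin²θ/Σ) β²`  (`gdot_eq_carter`).
The vectors `ℓ, n` are annihilated by `dθ` and `β`, while `m, m*` are annihilated by `dr` and `α`,
so the two pairs are orthogonal to each other. What remains are two-term sums, computed from
`α(ℓ) = Σ/Δ`, `α(n) = 1/2` and `β(m) = i (Σ/sin θ) dθ(m)`, together with `dθ(m) dθ(m*) = 1/(2Σ)`.
All divisions are legitimate since `Δ > 0` for `r > r₊`, `Σ > 0` for `r > 0`, and `sin θ > 0`.
-/


/-!
Statement 0: Normalization relations of the Kinnersley tetrad on the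
Boyer–Lindquist chart of the Kerr metric.
-/

noncomputable section

open Real

namespace KerrStmt0

/-- `Δ(r) = r² − 2mr + a²`. -/
def Δk (a m r : ℝ) : ℝ := r ^ 2 - 2 * m * r + a ^ 2

/-- `r₊ = m + √(m² − a²)`. -/
def rplus (a m : ℝ) : ℝ := m + Real.sqrt (m ^ 2 - a ^ 2)

/-- `Σ(r,θ) = r² + a² cos² θ`. -/
def Sigk (a r θ : ℝ) : ℝ := r ^ 2 + a ^ 2 * Real.cos θ ^ 2

/-- Kerr metric components in Boyer–Lindquist coordinates, at the point
`p = (t, r, θ, φ)` (coordinate order `t,r,θ,φ`). -/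
def gK (a m : ℝ) (p : Fin 4 → ℝ) : Matrix (Fin 4) (Fin 4) ℝ :=
  let r := p 1
  let θ := p 2
  !![ -((Δk a m r - a ^ 2 * Real.sin θ ^ 2) / Sigk a r θ), 0, 0,
        -(a * Real.sin θ ^ 2 * (r ^ 2 + a ^ 2 - Δk a m r) / Sigk a r θ);
      0, Sigk a r θ / Δk a m r, 0, 0;
      0, 0, Sigk a r θ, 0;
      -(a * Real.sin θ ^ 2 * (r ^ 2 + a ^ 2 - Δk a m r) / Sigk a r θ), 0, 0,
        ((r ^ 2 + a ^ 2) ^ 2 - Δk a m r * a ^ 2 * Real.sin θ ^ 2) * Real.sin θ ^ 2 / Sigk a r θ ]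

/-- The Kinnersley tetrad vector `ℓ`. -/
def ℓup (a m : ℝ) (p : Fin 4 → ℝ) : Fin 4 → ℂ :=
  let r := p 1
  ![(((r ^ 2 + a ^ 2) / Δk a m r : ℝ) : ℂ), 1, 0, ((a / Δk a m r : ℝ) : ℂ)]

/-- The Kinnersley tetrad vector `n`. -/
def nup (a m : ℝ) (p : Fin 4 → ℝ) : Fin 4 → ℂ :=
  let r := p 1
  let θ := p 2
  fun μ => ((1 / (2 * Sigk a r θ) : ℝ) : ℂ) *
    ![((r ^ 2 + a ^ 2 : ℝ) : ℂ), ((-(Δk a m r) : ℝ) : ℂ), 0, ((a : ℝ) : ℂ)] μ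

/-- The Kinnersley tetrad vector `m`. -/
def mup (a m : ℝ) (p : Fin 4 → ℝ) : Fin 4 → ℂ :=
  let r := p 1
  let θ := p 2
  fun μ => (1 / (Real.sqrt 2 * ((r : ℂ) + Complex.I * (a : ℂ) * (Real.cos θ : ℂ)))) *
    ![Complex.I * (a : ℂ) * (Real.sin θ : ℂ), 0, 1, Complex.I / (Real.sin θ : ℂ)] μ

/-- The componentwise complex conjugate `m*` of `m`. -/
def mst (a m : ℝ) (p : Fin 4 → ℝ) : Fin 4 → ℂ :=
  fun μ => starRingEnd ℂ (mup a m p μ)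

/-- Complex-bilinear contraction with the Kerr metric:
`ḡ(X,Y) = Σ_{μ,ν} ḡ_{μν} X^μ Y^ν`. -/
def gdot (a m : ℝ) (p : Fin 4 → ℝ) (X Y : Fin 4 → ℂ) : ℂ :=
  ∑ μ : Fin 4, ∑ ν : Fin 4, ((gK a m p μ ν : ℝ) : ℂ) * X μ * Y ν

/-- Carter's one-form `α = dt − a sin²θ dφ`, extended complex-linearly. -/
def carterα (a : ℝ) (p : Fin 4 → ℝ) (X : Fin 4 → ℂ) : ℂ :=
  X 0 - a * (Real.sin (p 2) : ℂ) ^ 2 * X 3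

/-- Carter's one-form `β = (r² + a²) dφ − a dt`, extended complex-linearly. -/
def carterβ (a : ℝ) (p : Fin 4 → ℝ) (X : Fin 4 → ℂ) : ℂ :=
  ((p 1 : ℂ) ^ 2 + (a : ℂ) ^ 2) * X 3 - a * X 0

/-- The Kerr metric is diagonal in Carter's coframe. No nonvanishing hypothesis is needed: the
identity is polynomial in `Σ⁻¹` and `Δ⁻¹`. -/
lemma gdot_eq_carter (a m : ℝ) (p : Fin 4 → ℝ) (X Y : Fin 4 → ℂ) :
    gdot a m p X Y =
      -((Δk a m (p 1) : ℂ) / (Sigk a (p 1) (p 2) : ℂ)) * (carterα a p X * carterα a p Y)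
      + (Sigk a (p 1) (p 2) : ℂ) / (Δk a m (p 1) : ℂ) * (X 1 * Y 1)
      + (Sigk a (p 1) (p 2) : ℂ) * (X 2 * Y 2)
      + (Real.sin (p 2) : ℂ) ^ 2 / (Sigk a (p 1) (p 2) : ℂ)
        * (carterβ a p X * carterβ a p Y) := by
  simp only [gdot, gK, carterα, carterβ, Fin.sum_univ_four, Matrix.of_apply, Matrix.cons_val]
  push_cast
  ring

lemma p1_pos {a m r : ℝ} (ham : |a| < m) (hr : rplus a m < r) : 0 < r := by
  have h := Real.sqrt_nonneg (m ^ 2 - a ^ 2)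
  have := abs_nonneg a
  unfold rplus at hr
  linarith

lemma Sigk_pos {a r : ℝ} (θ : ℝ) (hr : 0 < r) : 0 < Sigk a r θ := by
  unfold Sigk
  positivity

lemma Δk_pos {a m r : ℝ} (ham : |a| < m) (hr : rplus a m < r) : 0 < Δk a m r := by
  have hsq : 0 ≤ m ^ 2 - a ^ 2 := by
    have := sq_le_sq' (by linarith [abs_nonneg a]) ham.le
    rw [sq_abs] at this
    linarith
  unfold rplus at hr
  -- `Δ = (r − m)² − (m² − a²)`, and `r − m` exceeds the square root of `m² − a²`.
  have h : m ^ 2 - a ^ 2 < (r - m) ^ 2 :=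
    (Real.sqrt_lt_sqrt_iff hsq).1 <| by
      rw [Real.sqrt_sq (by linarith [Real.sqrt_nonneg (m ^ 2 - a ^ 2)])]
      linarith
  unfold Δk
  nlinarith

section Tetrad

variable (a m : ℝ) (p : Fin 4 → ℝ)

lemma carterα_ℓup :
    carterα a p (ℓup a m p) = (Sigk a (p 1) (p 2) : ℂ) / (Δk a m (p 1) : ℂ) := by
  have h : (Real.sin (p 2) : ℂ) ^ 2 + (Real.cos (p 2) : ℂ) ^ 2 = 1 := by
    exact_mod_cast Real.sin_sq_add_cos_sq (p 2)
  simp only [carterα, ℓup, Sigk, Matrix.cons_val]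
  push_cast at h ⊢
  linear_combination (-(a : ℂ) ^ 2 / (Δk a m (p 1) : ℂ)) * h

lemma carterβ_ℓup : carterβ a p (ℓup a m p) = 0 := by
  simp only [carterβ, ℓup, Matrix.cons_val]
  push_cast
  ring

lemma carterα_nup (hS : Sigk a (p 1) (p 2) ≠ 0) : carterα a p (nup a m p) = 1 / 2 := by
  have h : (p 1 : ℂ) ^ 2 + (a : ℂ) ^ 2 - a * (Real.sin (p 2) : ℂ) ^ 2 * a
      = (Sigk a (p 1) (p 2) : ℂ) := by
    rw [Sigk, Real.cos_sq']
    push_cast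
    ring
  have hS' : (Sigk a (p 1) (p 2) : ℂ) ≠ 0 := by exact_mod_cast hS
  simp only [carterα, nup, Matrix.cons_val]
  push_cast at h ⊢
  field_simp
  linear_combination h

lemma carterβ_nup : carterβ a p (nup a m p) = 0 := by
  simp only [carterβ, nup, Matrix.cons_val]
  push_cast
  ring

lemma carterα_mup (hs : Real.sin (p 2) ≠ 0) : carterα a p (mup a m p) = 0 := by
  have hs' : (Real.sin (p 2) : ℂ) ≠ 0 := by exact_mod_cast hs
  simp only [carterα, mup, Matrix.cons_val]
  generalize (Real.sin (p 2) : ℂ) = s at *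
  generalize 1 / ((√2 : ℂ) * _) = z
  field_simp
  ring

lemma carterβ_mup (hs : Real.sin (p 2) ≠ 0) :
    carterβ a p (mup a m p) =
      Complex.I * ((Sigk a (p 1) (p 2) : ℂ) / (Real.sin (p 2) : ℂ)) * mup a m p 2 := by
  have hs' : (Real.sin (p 2) : ℂ) ≠ 0 := by exact_mod_cast hs
  have h : (Sigk a (p 1) (p 2) : ℂ)
      = (p 1 : ℂ) ^ 2 + (a : ℂ) ^ 2 - (a : ℂ) ^ 2 * (Real.sin (p 2) : ℂ) ^ 2 := by
    rw [Sigk, Real.cos_sq']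
    push_cast
    ring
  rw [h]
  simp only [carterβ, mup, Matrix.cons_val]
  generalize (Real.sin (p 2) : ℂ) = s at *
  generalize 1 / ((√2 : ℂ) * _) = z
  field_simp

lemma carterα_mst : carterα a p (mst a m p) = starRingEnd ℂ (carterα a p (mup a m p)) := by
  simp only [carterα, mst, map_sub, map_mul, map_pow, Complex.conj_ofReal]

lemma carterβ_mst : carterβ a p (mst a m p) = starRingEnd ℂ (carterβ a p (mup a m p)) := by
  simp only [carterβ, mst, map_sub, map_add, map_mul, map_pow, Complex.conj_ofReal]

/-- `|m^θ|² = 1/(2Σ)`, because `|r + i a cos θ|² = Σ`. -/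
lemma mup_two_mul_conj :
    mup a m p 2 * starRingEnd ℂ (mup a m p 2) = 1 / (2 * (Sigk a (p 1) (p 2) : ℂ)) := by
  have h2 : (√2 : ℂ) ^ 2 = 2 := by
    exact_mod_cast Real.sq_sqrt (show (0 : ℝ) ≤ 2 by norm_num)
  have hden : ((√2 : ℂ) * ((p 1 : ℂ) + Complex.I * a * (Real.cos (p 2) : ℂ)))
      * ((√2 : ℂ) * ((p 1 : ℂ) + -Complex.I * a * (Real.cos (p 2) : ℂ)))
      = 2 * (Sigk a (p 1) (p 2) : ℂ) := by
    rw [Sigk]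
    push_cast
    linear_combination ((p 1 : ℂ) ^ 2 + (a : ℂ) ^ 2 * Complex.cos (p 2) ^ 2) * h2
      - (√2 : ℂ) ^ 2 * (a : ℂ) ^ 2 * Complex.cos (p 2) ^ 2 * Complex.I_sq
  rw [← hden]
  simp only [mup, Matrix.cons_val, mul_one, map_div₀, map_one, map_mul, map_add,
    Complex.conj_ofReal, Complex.conj_I]
  rw [div_mul_div_comm, one_mul]

end Tetrad

/-- At every point of the Boyer–Lindquist chart `U`, the
Kinnersley tetrad `(ℓ, n, m, m*)` satisfies the normalization relations
`ḡ(ℓ,n) = −1`, `ḡ(m,m*) = 1`, all self-contractions vanish, and all the mixed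
contractions `ḡ(ℓ,m), ḡ(ℓ,m*), ḡ(n,m), ḡ(n,m*)` vanish. -/
theorem kinnersley_normalization (a m : ℝ) (ha : 0 < |a|) (ham : |a| < m)
    (p : Fin 4 → ℝ) (hr : rplus a m < p 1) (hθ : p 2 ∈ Set.Ioo 0 π) :
    gdot a m p (ℓup a m p) (nup a m p) = -1 ∧
    gdot a m p (mup a m p) (mst a m p) = 1 ∧
    gdot a m p (ℓup a m p) (ℓup a m p) = 0 ∧
    gdot a m p (nup a m p) (nup a m p) = 0 ∧
    gdot a m p (mup a m p) (mup a m p) = 0 ∧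
    gdot a m p (mst a m p) (mst a m p) = 0 ∧
    gdot a m p (ℓup a m p) (mup a m p) = 0 ∧
    gdot a m p (ℓup a m p) (mst a m p) = 0 ∧
    gdot a m p (nup a m p) (mup a m p) = 0 ∧
    gdot a m p (nup a m p) (mst a m p) = 0 := by
  have hs : Real.sin (p 2) ≠ 0 := (Real.sin_pos_of_mem_Ioo hθ).ne'
  have hS : Sigk a (p 1) (p 2) ≠ 0 := (Sigk_pos (p 2) (p1_pos ham hr)).ne'
  have hs' : (Real.sin (p 2) : ℂ) ≠ 0 := by exact_mod_cast hs
  have hS' : (Sigk a (p 1) (p 2) : ℂ) ≠ 0 := by exact_mod_cast hS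
  have hD' : (Δk a m (p 1) : ℂ) ≠ 0 := by exact_mod_cast (Δk_pos ham hr).ne'
  have ℓ1 : ℓup a m p 1 = 1 := rfl
  have ℓ2 : ℓup a m p 2 = 0 := rfl
  have n1 : nup a m p 1 = -(Δk a m (p 1) : ℂ) / (2 * (Sigk a (p 1) (p 2) : ℂ)) := by
    simp only [nup, Matrix.cons_val]
    push_cast
    ring
  have n2 : nup a m p 2 = 0 := by simp [nup]
  have m1 : mup a m p 1 = 0 := by simp [mup]
  have s1 : mst a m p 1 = 0 := by simp [mst, m1]
  have s2 : mst a m p 2 = starRingEnd ℂ (mup a m p 2) := rfl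
  have hm := mup_two_mul_conj a m p
  simp only [gdot_eq_carter, carterα_mst, carterβ_mst, carterα_ℓup, carterβ_ℓup,
    carterα_nup a m p hS, carterβ_nup, carterα_mup a m p hs, carterβ_mup a m p hs,
    ℓ1, ℓ2, n1, n2, m1, s1, s2, map_mul, map_div₀, map_zero, Complex.conj_ofReal, Complex.conj_I]
  generalize starRingEnd ℂ (mup a m p 2) = w at *
  generalize mup a m p 2 = z at *
  generalize (Real.sin (p 2) : ℂ) = s at *
  generalize (Sigk a (p 1) (p 2) : ℂ) = S at *
  generalize (Δk a m (p 1) : ℂ) = D at *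
  have hm2 : 2 * S * (z * w) = 1 := by
    rw [hm]
    field_simp
  have hβ : s ^ 2 / S * (S / s) ^ 2 = S := by
    field_simp
  refine ⟨?_, ?_, ?_, ?_, ?_, ?_, by ring, by ring, by ring, by ring⟩
  · field_simp
    ring
  · linear_combination hm2 - z * w * Complex.I ^ 2 * hβ - S * z * w * Complex.I_sq
  · field_simp
    ring
  · field_simp
    ring
  · linear_combination z ^ 2 * Complex.I ^ 2 * hβ + S * z ^ 2 * Complex.I_sq
  · linear_combination w ^ 2 * Complex.I ^ 2 * hβ + S * w ^ 2 * Complex.I_sq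

end KerrStmt0
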